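/- Failure of strengthening in the multiplicative setting: in the two-sided sequent calculus consisting of the additive propositional rules together with the right introduction rule for intuitionistic implication (from Γ,A ⊢ B,Δ infer Γ ⊢ A⊃B,Δ) and the initial rule (Γ,p ⊢ p,Δ for atoms p), the sequent ⊢ p⊃q, p is provable, while neither ⊢ p⊃q nor ⊢ p is provable (where p and q are distinct propositional atoms). -/

import Mathlib

/-- Propositional formulas with atoms, the additive connectives
∧, t, ∨, f, and intuitionistic implication ⊃. -/
inductive PForm : Type
  | atom : ℕ → PForm
  | conj : PForm → PForm → PForm   -- ∧
  | tt   : PForm                   -- t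
  | disj : PForm → PForm → PForm   -- ∨
  | ff   : PForm                   -- f
  | imp  : PForm → PForm → PForm   -- ⊃
  deriving DecidableEq

/-- Two-sided sequent calculus Γ ⊢ Δ with the additive right rules for
∧, t, ∨, the right introduction rule for implication, and the initial
rule for atoms. -/
inductive PSeq : Multiset PForm → Multiset PForm → Prop
  | conjR {Γ : Multiset PForm} {B₁ B₂ : PForm} {Δ : Multiset PForm} :
      PSeq Γ (B₁ ::ₘ Δ) → PSeq Γ (B₂ ::ₘ Δ) → PSeq Γ (PForm.conj B₁ B₂ ::ₘ Δ)
  | ttR {Γ Δ : Multiset PForm} : PSeq Γ (PForm.tt ::ₘ Δ)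
  | disjRL {Γ : Multiset PForm} {B₁ B₂ : PForm} {Δ : Multiset PForm} :
      PSeq Γ (B₁ ::ₘ Δ) → PSeq Γ (PForm.disj B₁ B₂ ::ₘ Δ)
  | disjRR {Γ : Multiset PForm} {B₁ B₂ : PForm} {Δ : Multiset PForm} :
      PSeq Γ (B₂ ::ₘ Δ) → PSeq Γ (PForm.disj B₁ B₂ ::ₘ Δ)
  | impR {Γ : Multiset PForm} {A B : PForm} {Δ : Multiset PForm} :
      PSeq (A ::ₘ Γ) (B ::ₘ Δ) → PSeq Γ (PForm.imp A B ::ₘ Δ)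
  | init {Γ Δ : Multiset PForm} {n : ℕ} :
      PSeq (PForm.atom n ::ₘ Γ) (PForm.atom n ::ₘ Δ)

/-!
The calculus is sound for classical two-valued semantics, so a valuation making every formula of `Δ`
false refutes `⊢ Δ`: make `p` the only true atom for `p ⊃ q`, and make every atom false for `p`.
In `⊢ p ⊃ q, p`, on the other hand, the rule for `⊃` moves `p` to the left while keeping the
other conclusion `p` available, which is what the initial rule needs.
-/

/-- Truth of a formula under the two-valued valuation `v`, with `⊃` read as classical implication;
it serves to refute sequents. -/
def PForm.Holds (v : ℕ → Prop) : PForm → Prop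
  | .atom n => v n
  | .conj A B => A.Holds v ∧ B.Holds v
  | .tt => True
  | .disj A B => A.Holds v ∨ B.Holds v
  | .ff => False
  | .imp A B => A.Holds v → B.Holds v

namespace PSeq

theorem exists_holds {Γ Δ : Multiset PForm} (h : PSeq Γ Δ) (v : ℕ → Prop)
    (hΓ : ∀ A ∈ Γ, A.Holds v) : ∃ B ∈ Δ, B.Holds v := by
  induction h with
  | conjR _ _ ih₁ ih₂ =>
    simp only [Multiset.mem_cons, exists_eq_or_imp] at ih₁ ih₂ ⊢
    exact and_or_right.2 ⟨ih₁ hΓ, ih₂ hΓ⟩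
  | ttR => exact ⟨.tt, Multiset.mem_cons_self _ _, trivial⟩
  | disjRL _ ih =>
    simp only [Multiset.mem_cons, exists_eq_or_imp] at ih ⊢
    exact (ih hΓ).imp_left Or.inl
  | disjRR _ ih =>
    simp only [Multiset.mem_cons, exists_eq_or_imp] at ih ⊢
    exact (ih hΓ).imp_left Or.inr
  | @impR _ A _ _ _ ih =>
    simp only [Multiset.mem_cons, exists_eq_or_imp, forall_eq_or_imp] at ih ⊢
    by_cases hA : A.Holds v
    · exact (ih ⟨hA, hΓ⟩).imp_left fun hB _ => hB
    · exact .inl fun hA' => absurd hA' hA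
  | @init _ _ n =>
    exact ⟨.atom n, Multiset.mem_cons_self _ _, hΓ _ (Multiset.mem_cons_self _ _)⟩

theorem holds_of_singleton {A : PForm} (h : PSeq 0 {A}) (v : ℕ → Prop) : A.Holds v := by
  simpa using h.exists_holds v

theorem not_singleton_atom (p : ℕ) : ¬ PSeq 0 {PForm.atom p} :=
  fun h => h.holds_of_singleton fun _ => False

theorem not_singleton_imp_atom_atom {p q : ℕ} (hpq : p ≠ q) :
    ¬ PSeq 0 {PForm.imp (PForm.atom p) (PForm.atom q)} := by
  intro h
  have hqp : p = p → q = p := h.holds_of_singleton (· = p)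
  exact hpq (hqp rfl).symm

theorem imp_atom_cons_atom_cons (Γ Δ : Multiset PForm) (p : ℕ) (B : PForm) :
    PSeq Γ (PForm.imp (PForm.atom p) B ::ₘ PForm.atom p ::ₘ Δ) := by
  apply impR
  rw [Multiset.cons_swap]
  exact init

end PSeq

/-- Failure of strengthening in the multiplicative setting: for distinct
atoms p and q, the sequent ⊢ p⊃q, p is provable while neither ⊢ p⊃q nor
⊢ p is provable. -/
theorem strengthening_fails (p q : ℕ) (hpq : p ≠ q) :
    PSeq 0 {PForm.imp (PForm.atom p) (PForm.atom q), PForm.atom p} ∧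
    ¬ PSeq 0 {PForm.imp (PForm.atom p) (PForm.atom q)} ∧
    ¬ PSeq 0 {PForm.atom p} :=
  ⟨PSeq.imp_atom_cons_atom_cons 0 0 p (PForm.atom q),
    PSeq.not_singleton_imp_atom_atom hpq, PSeq.not_singleton_atom p⟩
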